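/- Let α, β, γ be real numbers with α > -1/2, γ > -1, α + β + γ > -3/2, and γ < −1/2. Define, for t ≥ 1, F(t) = ∫₀¹ s^{2α} (∫ₛ¹ u^β (u−s)^γ du) (∫ₜ^{t+1} v^β (v−s)^γ dv) ds, V(t) = ∫₀^{t+1} s^{2α} (∫_{max(s,t)}^{t+1} u^β (u−s)^γ du)² ds, C = ∫₀¹ s^{2α} (∫ₛ¹ u^β (u−s)^γ du)² ds, and r(t) = F(t) / (√C · √V(t)). Then there exists a constant c > 0 (depending on α, β, γ) such that lim_{t→+∞} t^{α−γ} r(t) = c. -/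

import Mathlib

open MeasureTheory Filter intervalIntegral

lemma measurable_intervalIntegral_param {k : ℝ → ℝ → ℝ} (hk : Measurable (Function.uncurry k))
    {l r : ℝ → ℝ} (hl : Measurable l) (hr : Measurable r) :
    Measurable fun s => ∫ u in (l s)..(r s), k s u := by
  have key : ∀ {l r : ℝ → ℝ}, Measurable l → Measurable r →
      Measurable fun s => ∫ u in Set.Ioc (l s) (r s), k s u := by
    intro l r hl hr
    have hS : MeasurableSet {p : ℝ × ℝ | l p.1 < p.2 ∧ p.2 ≤ r p.1} :=
      (measurableSet_lt (hl.comp measurable_fst) measurable_snd).inter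
        (measurableSet_le measurable_snd (hr.comp measurable_fst))
    have h := (hk.indicator hS).stronglyMeasurable.integral_prod_right' (ν := volume)
    have heq : (fun s => ∫ u in Set.Ioc (l s) (r s), k s u) = fun s => ∫ u,
        {p : ℝ × ℝ | l p.1 < p.2 ∧ p.2 ≤ r p.1}.indicator (Function.uncurry k) (s, u) := by
      funext s
      rw [← MeasureTheory.integral_indicator measurableSet_Ioc]
      rfl
    rw [heq]
    exact h.measurable
  simp only [intervalIntegral]
  exact (key hl hr).sub (key hr hl)

lemma measurable_rpow_mul_sub_rpow (t β γ : ℝ) :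
    Measurable (Function.uncurry fun s u : ℝ => (1 + u / t) ^ β * (u - s) ^ γ) := by
  unfold Function.uncurry
  fun_prop

lemma intervalIntegrable_sub_rpow {γ : ℝ} (hγ : -1 < γ) (s a b : ℝ) :
    IntervalIntegrable (fun u : ℝ => (u - s) ^ γ) volume a b := by
  have h := (intervalIntegrable_rpow' (a := a - s) (b := b - s) hγ).comp_sub_right s
  simpa using h

lemma rpow_mul_sub_rpow_le {β γ a b s u : ℝ} (ha : 0 ≤ a) (hb : 0 ≤ b) (hab : -(a + b) ≤ β)
    (hs : 0 < s) (hsu : s < u) (hu : u ≤ 1) :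
    u ^ β * (u - s) ^ γ ≤ s ^ (-a) * (u - s) ^ (γ - b) := by
  have hu0 : 0 < u := hs.trans hsu
  have hus : 0 < u - s := sub_pos.2 hsu
  calc u ^ β * (u - s) ^ γ ≤ u ^ (-a + -b) * (u - s) ^ γ := by
        gcongr ?_ * _
        exact Real.rpow_le_rpow_of_exponent_ge hu0 hu (by linarith)
    _ = u ^ (-a) * u ^ (-b) * (u - s) ^ γ := by rw [Real.rpow_add hu0]
    _ ≤ s ^ (-a) * (u - s) ^ (-b) * (u - s) ^ γ := by
        gcongr ?_ * ?_ * _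
        · exact Real.rpow_le_rpow_of_nonpos hs hsu.le (by linarith)
        · exact Real.rpow_le_rpow_of_nonpos hus (by linarith) (by linarith)
    _ = s ^ (-a) * (u - s) ^ (γ - b) := by
        rw [mul_assoc, ← Real.rpow_add hus]; ring_nf

lemma intervalIntegrable_rpow_mul_sub_rpow {γ : ℝ} (β : ℝ) (hγ : -1 < γ) {s : ℝ} (hs : 0 < s) :
    IntervalIntegrable (fun u : ℝ => u ^ β * (u - s) ^ γ) volume s 1 := by
  by_cases h1 : s ≤ 1
  · refine (intervalIntegrable_sub_rpow hγ s s 1).continuousOn_mul ?_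
    intro u hu
    rw [Set.uIcc_of_le h1] at hu
    exact (Real.continuousAt_rpow_const u β (Or.inl (hs.trans_le hu.1).ne')).continuousWithinAt
  · refine (intervalIntegrable_sub_rpow hγ s s 1).continuousOn_mul ?_
    intro u hu
    rw [Set.uIcc_of_ge (not_le.1 h1).le] at hu
    exact (Real.continuousAt_rpow_const u β
      (Or.inl (zero_lt_one.trans_le hu.1).ne')).continuousWithinAt

lemma integral_rpow_mul_sub_rpow_pos {γ : ℝ} (β : ℝ) (hγ : -1 < γ) {s : ℝ} (hs : 0 < s)
    (hs1 : s < 1) : 0 < ∫ u in s..1, u ^ β * (u - s) ^ γ := by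
  refine intervalIntegral_pos_of_pos_on (intervalIntegrable_rpow_mul_sub_rpow β hγ hs) ?_ hs1
  intro u hu
  have := hs.trans hu.1
  have := sub_pos.2 hu.1
  positivity

lemma integral_sub_rpow {γ : ℝ} (hγ : -1 < γ) (x a b : ℝ) :
    ∫ y in a..b, (y - x) ^ γ = ((b - x) ^ (γ + 1) - (a - x) ^ (γ + 1)) / (γ + 1) := by
  rw [intervalIntegral.integral_comp_sub_right (fun y => y ^ γ), integral_rpow (Or.inl hγ)]

/-- Near the origin the kernel integral is dominated by a power `s ^ (-a)` with
`a < α + 1/2`. -/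
lemma exists_integral_rpow_mul_sub_rpow_le {α β γ : ℝ} (hα : -(1/2 : ℝ) < α) (hγ : -1 < γ)
    (hαβγ : -(3/2 : ℝ) < α + β + γ) :
    ∃ a D : ℝ, 0 < a ∧ a < α + 1/2 ∧ 0 < D ∧ ∀ s : ℝ, 0 < s → s ≤ 1 →
      ∫ u in s..1, u ^ β * (u - s) ^ γ ≤ D * s ^ (-a) := by
  obtain ⟨ε, hε, h⟩ : ∃ ε > 0, ε < α + 1/2 ∧ ε < γ + 1 ∧ 2 * ε < α + β + γ + 3/2 := by
    refine ⟨min (min (α + 1/2) (γ + 1)) (α + β + γ + 3/2) / 3, ?_, ?_, ?_, ?_⟩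
    · have : 0 < min (min (α + 1/2) (γ + 1)) (α + β + γ + 3/2) :=
        lt_min (lt_min (by linarith) (by linarith)) (by linarith)
      linarith
    all_goals
      have h1 := min_le_left (min (α + 1/2) (γ + 1)) (α + β + γ + 3/2)
      have h2 := min_le_right (min (α + 1/2) (γ + 1)) (α + β + γ + 3/2)
      have h3 := min_le_left (α + 1/2) (γ + 1)
      have h4 := min_le_right (α + 1/2) (γ + 1)
      linarith
  obtain ⟨h1, h2, h3⟩ := h
  refine ⟨α + 1/2 - ε, 1 / ε, by linarith, by linarith, by positivity, ?_⟩
  intro s hs hs1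
  have hexp : γ - (γ + 1 - ε) = ε - 1 := by ring
  calc ∫ u in s..1, u ^ β * (u - s) ^ γ
      ≤ ∫ u in s..1, s ^ (-(α + 1/2 - ε)) * (u - s) ^ (ε - 1) := by
        refine integral_mono_on_of_le_Ioo hs1 (intervalIntegrable_rpow_mul_sub_rpow β hγ hs)
          ((intervalIntegrable_sub_rpow (by linarith) s s 1).const_mul _) ?_
        intro u hu
        rw [← hexp]
        exact rpow_mul_sub_rpow_le (by linarith) (by linarith) (by linarith) hs hu.1 hu.2.le
    _ = s ^ (-(α + 1/2 - ε)) * ((1 - s) ^ ε / ε) := by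
        rw [intervalIntegral.integral_const_mul, integral_sub_rpow (by linarith)]
        simp [Real.zero_rpow hε.ne']
    _ ≤ s ^ (-(α + 1/2 - ε)) * (1 / ε) := by
        gcongr
        exact Real.rpow_le_one (by linarith) (by linarith) hε.le
    _ = 1 / ε * s ^ (-(α + 1/2 - ε)) := mul_comm _ _

lemma measurable_integral_rpow_mul_sub_rpow (β γ : ℝ) :
    Measurable fun s : ℝ => ∫ u in s..1, u ^ β * (u - s) ^ γ := by
  refine measurable_intervalIntegral_param (k := fun s u => u ^ β * (u - s) ^ γ) ?_
    measurable_id measurable_const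
  unfold Function.uncurry
  fun_prop

lemma intervalIntegrable_weight_mul_kernel {α β γ : ℝ} (hα : -(1/2 : ℝ) < α) (hγ : -1 < γ)
    (hαβγ : -(3/2 : ℝ) < α + β + γ) :
    IntervalIntegrable (fun s : ℝ => s ^ (2*α) * ∫ u in s..1, u ^ β * (u - s) ^ γ)
      volume 0 1 ∧
    IntervalIntegrable (fun s : ℝ => s ^ (2*α) * (∫ u in s..1, u ^ β * (u - s) ^ γ) ^ 2)
      volume 0 1 := by
  obtain ⟨a, D, ha, haα, hD, hle⟩ := exists_integral_rpow_mul_sub_rpow_le hα hγ hαβγ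
  have hm := measurable_integral_rpow_mul_sub_rpow β γ
  have hnn : ∀ s : ℝ, 0 < s → s ≤ 1 → 0 ≤ ∫ u in s..1, u ^ β * (u - s) ^ γ := by
    intro s hs hs1
    rcases hs1.lt_or_eq with h | h
    · exact (integral_rpow_mul_sub_rpow_pos β hγ hs h).le
    · simp [h]
  constructor
  · refine ((intervalIntegrable_rpow' (r := 2*α + -a) (by linarith)).const_mul D).mono_fun
      (by fun_prop) ?_
    rw [Set.uIoc_of_le zero_le_one]
    refine (ae_restrict_iff' measurableSet_Ioc).2 (ae_of_all _ fun s hs => ?_)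
    have h0 := hnn s hs.1 hs.2
    have hp := Real.rpow_pos_of_pos hs.1 (2*α)
    beta_reduce
    rw [Real.norm_of_nonneg (mul_nonneg hp.le h0), Real.norm_of_nonneg
      (mul_nonneg hD.le (Real.rpow_nonneg hs.1.le _)), Real.rpow_add hs.1]
    calc _ ≤ s ^ (2*α) * (D * s ^ (-a)) := by gcongr; exact hle s hs.1 hs.2
      _ = _ := by ring
  · refine ((intervalIntegrable_rpow' (r := 2*α + (-a + -a)) (by linarith)).const_mul
      (D ^ 2)).mono_fun (by fun_prop) ?_
    rw [Set.uIoc_of_le zero_le_one]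
    refine (ae_restrict_iff' measurableSet_Ioc).2 (ae_of_all _ fun s hs => ?_)
    have h0 := hnn s hs.1 hs.2
    have hp := Real.rpow_pos_of_pos hs.1 (2*α)
    beta_reduce
    rw [Real.norm_of_nonneg (mul_nonneg hp.le (sq_nonneg _)), Real.norm_of_nonneg
      (mul_nonneg (by positivity) (Real.rpow_nonneg hs.1.le _)), Real.rpow_add hs.1,
      Real.rpow_add hs.1]
    calc _ ≤ s ^ (2*α) * (D * s ^ (-a)) ^ 2 := by gcongr; exact hle s hs.1 hs.2
      _ = _ := by ring

lemma rpow_le_two_rpow_abs {x : ℝ} (hx : 1/2 ≤ x) (hx2 : x ≤ 2) (p : ℝ) : x ^ p ≤ 2 ^ |p| := by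
  rcases le_total 0 p with hp | hp
  · rw [abs_of_nonneg hp]
    exact Real.rpow_le_rpow (by linarith) hx2 hp
  · rw [abs_of_nonpos hp, Real.rpow_neg zero_le_two, ← Real.inv_rpow zero_le_two]
    exact Real.rpow_le_rpow_of_nonpos (by norm_num) (by linarith) hp

lemma tendsto_one_add_div_rpow (y p : ℝ) :
    Tendsto (fun t : ℝ => (1 + y / t) ^ p) atTop (nhds 1) := by
  have h : Tendsto (fun t : ℝ => 1 + y / t) atTop (nhds 1) := by
    simpa using (tendsto_const_nhds (x := (1:ℝ))).add (tendsto_const_nhds.div_atTop tendsto_id)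
  simpa using h.rpow_const (Or.inl one_ne_zero)

lemma integral_shift_eq_mul {β γ s t : ℝ} (hs1 : s ≤ 1) (ht : 2 ≤ t) :
    ∫ v in t..(t+1), v ^ β * (v - s) ^ γ =
      t ^ (β + γ) * ∫ y in (0:ℝ)..1, (1 + y / t) ^ β * (1 + (y - s) / t) ^ γ := by
  have ht0 : 0 < t := by linarith
  have h := intervalIntegral.integral_comp_add_left (a := 0) (b := 1)
    (fun v : ℝ => v ^ β * (v - s) ^ γ) t
  rw [add_zero] at h
  rw [← h, ← intervalIntegral.integral_const_mul]
  refine intervalIntegral.integral_congr fun y hy => ?_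
  rw [Set.uIcc_of_le zero_le_one] at hy
  have h1 : t + y = t * (1 + y / t) := by field_simp
  have h2 : t + y - s = t * (1 + (y - s) / t) := by field_simp; ring
  have h3 : 0 ≤ 1 + y / t := by have := div_nonneg hy.1 ht0.le; linarith
  have h4 : 0 ≤ 1 + (y - s) / t := by
    have : -1 ≤ (y - s) / t := by rw [le_div_iff₀ ht0]; linarith [hy.1]
    linarith
  rw [h2, h1, Real.mul_rpow ht0.le h3, Real.mul_rpow ht0.le h4, Real.rpow_add ht0]
  ring

lemma norm_one_add_div_rpow_mul_le {β γ s t y : ℝ} (hs : 0 ≤ s) (hs1 : s ≤ 1) (ht : 2 ≤ t)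
    (hy : 0 ≤ y) (hy1 : y ≤ 1) :
    ‖(1 + y / t) ^ β * (1 + (y - s) / t) ^ γ‖ ≤ 2 ^ |β| * 2 ^ |γ| := by
  have ht0 : 0 < t := by linarith
  have h1 : 0 ≤ y / t := div_nonneg hy ht0.le
  have h2 : y / t ≤ 1 := by rw [div_le_iff₀ ht0]; linarith
  have h3 : -(1/2) ≤ (y - s) / t := by rw [le_div_iff₀ ht0]; linarith
  have h4 : (y - s) / t ≤ 1 := by rw [div_le_iff₀ ht0]; linarith
  have h5 : 0 ≤ 1 + y / t := by linarith
  have h6 : 0 ≤ 1 + (y - s) / t := by linarith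
  rw [Real.norm_of_nonneg (by positivity)]
  gcongr
  · exact rpow_le_two_rpow_abs (by linarith) (by linarith) _
  · exact rpow_le_two_rpow_abs (by linarith) (by linarith) _

lemma norm_integral_one_add_div_rpow_mul_le {β γ s t : ℝ} (hs : 0 ≤ s) (hs1 : s ≤ 1)
    (ht : 2 ≤ t) :
    ‖∫ y in (0:ℝ)..1, (1 + y / t) ^ β * (1 + (y - s) / t) ^ γ‖ ≤ 2 ^ |β| * 2 ^ |γ| := by
  have h := intervalIntegral.norm_integral_le_of_norm_le_const (a := 0) (b := 1)
    (f := fun y : ℝ => (1 + y / t) ^ β * (1 + (y - s) / t) ^ γ) (C := 2 ^ |β| * 2 ^ |γ|) (by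
      intro y hy
      rw [Set.uIoc_of_le zero_le_one] at hy
      exact norm_one_add_div_rpow_mul_le hs hs1 ht hy.1.le hy.2)
  simpa using h

lemma tendsto_integral_one_add_div_rpow_mul {s : ℝ} (β γ : ℝ) (hs : 0 ≤ s) (hs1 : s ≤ 1) :
    Tendsto (fun t : ℝ => ∫ y in (0:ℝ)..1, (1 + y / t) ^ β * (1 + (y - s) / t) ^ γ)
      atTop (nhds 1) := by
  have h := intervalIntegral.tendsto_integral_filter_of_dominated_convergence
    (μ := volume) (a := 0) (b := 1) (l := atTop)
    (F := fun t y : ℝ => (1 + y / t) ^ β * (1 + (y - s) / t) ^ γ) (f := fun _ => 1)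
    (fun _ => 2 ^ |β| * 2 ^ |γ|)
    (Eventually.of_forall fun t => by fun_prop)
    (by
      filter_upwards [eventually_ge_atTop 2] with t ht
      refine ae_of_all _ fun y hy => ?_
      rw [Set.uIoc_of_le zero_le_one] at hy
      exact norm_one_add_div_rpow_mul_le hs hs1 ht hy.1.le hy.2)
    intervalIntegrable_const
    (ae_of_all _ fun y _ => by
      simpa using (tendsto_one_add_div_rpow y β).mul (tendsto_one_add_div_rpow (y - s) γ))
  simpa using h

/-- Asymptotics of the covariance: `F t ~ A * t ^ (β + γ)` with `A > 0`. -/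
lemma exists_covariance_asymptotics {α β γ : ℝ} (hα : -(1/2 : ℝ) < α) (hγ : -1 < γ)
    (hαβγ : -(3/2 : ℝ) < α + β + γ) :
    ∃ (A : ℝ) (Φ : ℝ → ℝ), 0 < A ∧ Tendsto Φ atTop (nhds A) ∧ ∀ t : ℝ, 2 ≤ t →
      (∫ s in (0:ℝ)..1, s ^ (2*α) * (∫ u in s..1, u ^ β * (u - s) ^ γ) *
        (∫ v in t..(t+1), v ^ β * (v - s) ^ γ)) = t ^ (β + γ) * Φ t := by
  have hintegrable := (intervalIntegrable_weight_mul_kernel hα hγ hαβγ).1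
  have hm := measurable_integral_rpow_mul_sub_rpow β γ
  refine ⟨∫ s in (0:ℝ)..1, s ^ (2*α) * ∫ u in s..1, u ^ β * (u - s) ^ γ,
    fun t => ∫ s in (0:ℝ)..1, s ^ (2*α) * (∫ u in s..1, u ^ β * (u - s) ^ γ) *
      ∫ y in (0:ℝ)..1, (1 + y / t) ^ β * (1 + (y - s) / t) ^ γ, ?_, ?_, ?_⟩
  · refine intervalIntegral_pos_of_pos_on hintegrable (fun s hs => ?_) zero_lt_one
    exact mul_pos (Real.rpow_pos_of_pos hs.1 _)
      (integral_rpow_mul_sub_rpow_pos β hγ hs.1 hs.2)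
  · refine intervalIntegral.tendsto_integral_filter_of_dominated_convergence
      (fun s => ‖s ^ (2*α) * ∫ u in s..1, u ^ β * (u - s) ^ γ‖ * (2 ^ |β| * 2 ^ |γ|))
      (Eventually.of_forall fun t => ?_) ?_ (hintegrable.norm.mul_const _) (ae_of_all _ fun s hs => ?_)
    · have : Measurable fun s : ℝ => ∫ y in (0:ℝ)..1, (1 + y / t) ^ β * (1 + (y - s) / t) ^ γ := by
        refine measurable_intervalIntegral_param
          (k := fun s y => (1 + y / t) ^ β * (1 + (y - s) / t) ^ γ) ?_
          measurable_const measurable_const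
        unfold Function.uncurry
        fun_prop
      fun_prop
    · filter_upwards [eventually_ge_atTop 2] with t ht
      refine ae_of_all _ fun s hs => ?_
      rw [Set.uIoc_of_le zero_le_one] at hs
      rw [norm_mul]
      gcongr
      exact norm_integral_one_add_div_rpow_mul_le hs.1.le hs.2 ht
    · rw [Set.uIoc_of_le zero_le_one] at hs
      simpa using (tendsto_integral_one_add_div_rpow_mul β γ hs.1.le hs.2).const_mul
        (s ^ (2*α) * ∫ u in s..1, u ^ β * (u - s) ^ γ)
  · intro t ht
    rw [← intervalIntegral.integral_const_mul]
    refine intervalIntegral.integral_congr fun s hs => ?_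
    rw [Set.uIcc_of_le zero_le_one] at hs
    rw [integral_shift_eq_mul hs.2 ht]
    ring

lemma max_sub_nonneg (x : ℝ) : 0 ≤ max x 0 - x := sub_nonneg.2 (le_max_left x 0)

lemma integral_max_sub_rpow_nonneg (γ : ℝ) {x : ℝ} (hx : x ≤ 1) :
    0 ≤ ∫ y in (max x 0)..1, (y - x) ^ γ := by
  refine intervalIntegral.integral_nonneg (max_le hx zero_le_one) fun y hy => ?_
  exact Real.rpow_nonneg (sub_nonneg.2 ((le_max_left x 0).trans hy.1)) _

/-- Decay of the increment kernel at `-∞`. -/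
lemma exists_integral_max_sub_rpow_le {γ : ℝ} (hγ : -1 < γ) (hγ0 : γ < 0) :
    ∃ D : ℝ, 0 < D ∧ ∀ x : ℝ, x ≤ 1 → ∫ y in (max x 0)..1, (y - x) ^ γ ≤ D * (2 - x) ^ γ := by
  have hγ1 : 0 < γ + 1 := by linarith
  refine ⟨3 ^ (-γ) * (1 + 2 ^ (γ + 1) / (γ + 1)), by positivity, fun x hx => ?_⟩
  have h2 : 0 < 2 - x := by linarith
  have h3 : (3:ℝ) ^ (-γ) * (2 - x) ^ γ = ((2 - x) / 3) ^ γ := by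
    rw [Real.div_rpow h2.le (by norm_num), Real.rpow_neg (by norm_num)]
    ring
  rw [mul_right_comm, h3, mul_add, mul_one]
  have hq : 0 < ((2 - x) / 3) ^ γ := by positivity
  have hc : 0 < (2:ℝ) ^ (γ + 1) / (γ + 1) := by positivity
  rcases le_or_gt x (-1) with h | h
  · have hle : ∫ y in (max x 0)..1, (y - x) ^ γ ≤ ∫ y in (0:ℝ)..1, ((2 - x) / 3) ^ γ := by
      rw [max_eq_right (by linarith)]
      refine integral_mono_on zero_le_one (intervalIntegrable_sub_rpow hγ x 0 1)
        intervalIntegrable_const fun y hy => ?_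
      exact Real.rpow_le_rpow_of_nonpos (by positivity) (by linarith [hy.1]) hγ0.le
    rw [intervalIntegral.integral_const, sub_zero, one_smul] at hle
    have := mul_pos hq hc
    linarith
  · have h1 : (1:ℝ) ≤ ((2 - x) / 3) ^ γ :=
      Real.one_le_rpow_of_pos_of_le_one_of_nonpos (by positivity) (by linarith) hγ0.le
    have hle : ∫ y in (max x 0)..1, (y - x) ^ γ ≤ 2 ^ (γ + 1) / (γ + 1) := by
      rw [integral_sub_rpow hγ]
      gcongr
      have ha : (1 - x) ^ (γ + 1) ≤ 2 ^ (γ + 1) :=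
        Real.rpow_le_rpow (by linarith) (by linarith) hγ1.le
      have hb := Real.rpow_nonneg (max_sub_nonneg x) (γ + 1)
      linarith
    have := le_mul_of_one_le_left hc.le h1
    linarith

lemma one_add_div_rpow_bounds {t y : ℝ} (β : ℝ) (ht : 1 ≤ t) (hy : 0 ≤ y) (hy1 : y ≤ 1) :
    0 ≤ (1 + y / t) ^ β ∧ (1 + y / t) ^ β ≤ 2 ^ |β| := by
  have ht0 : 0 < t := by linarith
  have h1 : 0 ≤ y / t := div_nonneg hy ht0.le
  have h2 : y / t ≤ 1 := by rw [div_le_iff₀ ht0]; linarith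
  exact ⟨Real.rpow_nonneg (by linarith) _, rpow_le_two_rpow_abs (by linarith) (by linarith) _⟩

lemma integral_max_kernel_nonneg (β γ : ℝ) {t x : ℝ} (ht : 1 ≤ t) (hx : x ≤ 1) :
    0 ≤ ∫ y in (max x 0)..1, (1 + y / t) ^ β * (y - x) ^ γ := by
  refine intervalIntegral.integral_nonneg (max_le hx zero_le_one) fun y hy => ?_
  exact mul_nonneg (one_add_div_rpow_bounds β ht ((le_max_right x 0).trans hy.1) hy.2).1
    (Real.rpow_nonneg (sub_nonneg.2 ((le_max_left x 0).trans hy.1)) _)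

lemma norm_kernel_le (β γ : ℝ) {t x y : ℝ} (ht : 1 ≤ t) (hx : x ≤ 1)
    (hy : y ∈ Set.uIoc (max x 0) 1) :
    ‖(1 + y / t) ^ β * (y - x) ^ γ‖ ≤ 2 ^ |β| * (y - x) ^ γ := by
  rw [Set.uIoc_of_le (max_le hx zero_le_one)] at hy
  have hb := one_add_div_rpow_bounds β ht ((le_max_right x 0).trans hy.1.le) hy.2
  have hn : 0 ≤ (y - x) ^ γ :=
    Real.rpow_nonneg (sub_nonneg.2 ((le_max_left x 0).trans hy.1.le)) _
  rw [Real.norm_of_nonneg (mul_nonneg hb.1 hn)]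
  exact mul_le_mul_of_nonneg_right hb.2 hn

lemma integral_max_kernel_le {β γ : ℝ} (hγ : -1 < γ) {t x : ℝ} (ht : 1 ≤ t) (hx : x ≤ 1) :
    ∫ y in (max x 0)..1, (1 + y / t) ^ β * (y - x) ^ γ ≤
      2 ^ |β| * ∫ y in (max x 0)..1, (y - x) ^ γ := by
  rw [← intervalIntegral.integral_const_mul]
  have h := intervalIntegral.norm_integral_le_of_norm_le (μ := volume)
    (f := fun y => (1 + y / t) ^ β * (y - x) ^ γ) (max_le hx zero_le_one)
    (ae_of_all _ fun y hy => norm_kernel_le β γ ht hx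
      (by rwa [Set.uIoc_of_le (max_le hx zero_le_one)]))
    ((intervalIntegrable_sub_rpow hγ x _ _).const_mul _)
  exact (le_abs_self _).trans h

lemma tendsto_integral_max_kernel {γ : ℝ} (β : ℝ) (hγ : -1 < γ) {x : ℝ} (hx : x ≤ 1) :
    Tendsto (fun t : ℝ => ∫ y in (max x 0)..1, (1 + y / t) ^ β * (y - x) ^ γ) atTop
      (nhds (∫ y in (max x 0)..1, (y - x) ^ γ)) := by
  refine intervalIntegral.tendsto_integral_filter_of_dominated_convergence
    (fun y => 2 ^ |β| * (y - x) ^ γ) (Eventually.of_forall fun t => by fun_prop) ?_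
    ((intervalIntegrable_sub_rpow hγ x _ _).const_mul _) (ae_of_all _ fun y _ => ?_)
  · filter_upwards [eventually_ge_atTop 1] with t ht
    exact ae_of_all _ fun y hy => norm_kernel_le β γ ht hx hy
  · simpa using (tendsto_one_add_div_rpow y β).mul_const ((y - x) ^ γ)

lemma measurable_integral_max_kernel (β γ t : ℝ) :
    Measurable fun x : ℝ => ∫ y in (max x 0)..1, (1 + y / t) ^ β * (y - x) ^ γ :=
  measurable_intervalIntegral_param (k := fun x y => (1 + y / t) ^ β * (y - x) ^ γ)
    (measurable_rpow_mul_sub_rpow t β γ) (by fun_prop) measurable_const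

/-- Rescaling of the increment variance. -/
lemma increment_variance_eq_mul {α β γ t : ℝ} (ht : 1 ≤ t) :
    (∫ s in (0:ℝ)..(t+1), s ^ (2*α) *
      (∫ u in (max s t)..(t+1), u ^ β * (u - s) ^ γ) ^ 2) =
    (t ^ (α + β)) ^ 2 * ∫ x in (-t)..1, (1 + x / t) ^ (2*α) *
      (∫ y in (max x 0)..1, (1 + y / t) ^ β * (y - x) ^ γ) ^ 2 := by
  have ht0 : 0 < t := by linarith
  have h := intervalIntegral.integral_comp_add_left (a := -t) (b := 1)
    (fun s : ℝ => s ^ (2*α) * (∫ u in (max s t)..(t+1), u ^ β * (u - s) ^ γ) ^ 2) t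
  rw [add_neg_cancel] at h
  rw [← h, ← intervalIntegral.integral_const_mul]
  refine intervalIntegral.integral_congr fun x hx => ?_
  rw [Set.uIcc_of_le (by linarith)] at hx
  have hin : ∫ u in (max (t + x) t)..(t+1), u ^ β * (u - (t + x)) ^ γ =
      t ^ β * ∫ y in (max x 0)..1, (1 + y / t) ^ β * (y - x) ^ γ := by
    have h' := intervalIntegral.integral_comp_add_left (a := max x 0) (b := 1)
      (fun u : ℝ => u ^ β * (u - (t + x)) ^ γ) t
    have hmax : max (t + x) t = t + max x 0 := by rw [← max_add_add_left, add_zero]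
    rw [hmax, ← h', ← intervalIntegral.integral_const_mul]
    refine intervalIntegral.integral_congr fun y hy => ?_
    rw [Set.uIcc_of_le (max_le hx.2 zero_le_one)] at hy
    have h1 : t + y = t * (1 + y / t) := by field_simp
    have h2 : t + y - (t + x) = y - x := by ring
    have h3 : 0 ≤ 1 + y / t := by
      have := div_nonneg ((le_max_right x 0).trans hy.1) ht0.le
      linarith
    rw [h2, h1, Real.mul_rpow ht0.le h3]
    ring
  have h1 : t + x = t * (1 + x / t) := by field_simp
  have h3 : 0 ≤ 1 + x / t := by
    have : -1 ≤ x / t := by rw [le_div_iff₀ ht0]; linarith [hx.1]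
    linarith
  rw [hin, h1, Real.mul_rpow ht0.le h3, two_mul, Real.rpow_add ht0, Real.rpow_add ht0]
  ring

lemma intervalIntegrable_one_add_div_rpow {p : ℝ} (hp : -1 < p) {t : ℝ} (ht : 0 < t) (a b : ℝ) :
    IntervalIntegrable (fun x : ℝ => (1 + x / t) ^ p) volume a b := by
  have h := ((intervalIntegrable_rpow' (a := 1 + a / t) (b := 1 + b / t) hp).comp_add_left
    1).comp_mul_left (c := t⁻¹)
  have ha : (1 + a / t - 1) / t⁻¹ = a := by field_simp; ring
  have hb : (1 + b / t - 1) / t⁻¹ = b := by field_simp; ring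
  rw [ha, hb] at h
  refine h.congr fun x _ => ?_
  ring_nf

lemma integrableOn_two_sub_rpow {p : ℝ} (hp : p < -1) :
    IntegrableOn (fun x : ℝ => (2 - x) ^ p) (Set.Iic 1) := by
  have h := (Measure.measurePreserving_sub_left volume (2:ℝ)).integrableOn_comp_preimage
    (Homeomorph.subLeft (2:ℝ)).measurableEmbedding (f := fun x : ℝ => x ^ p) (s := Set.Ioi (1/2))
  refine (h.2 (integrableOn_Ioi_rpow_of_lt hp (by norm_num))).mono_set fun x hx => ?_
  simp only [Set.mem_Iic, Set.mem_preimage, Set.mem_Ioi] at hx ⊢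
  linarith

/-- The part of the rescaled variance far from the origin vanishes in the limit. -/
lemma tendsto_variance_far {α β γ : ℝ} (hα : -(1/2 : ℝ) < α) (hγ : -1 < γ)
    (hγ' : γ < -(1/2 : ℝ)) :
    Tendsto (fun t : ℝ => ∫ x in (-t)..(-t/2), (1 + x / t) ^ (2*α) *
      (∫ y in (max x 0)..1, (1 + y / t) ^ β * (y - x) ^ γ) ^ 2) atTop (nhds 0) := by
  obtain ⟨D, hD, hle⟩ := exists_integral_max_sub_rpow_le hγ (by linarith)
  have hlim : Tendsto (fun t : ℝ => ((∫ w in (0:ℝ)..(1/2), w ^ (2*α)) *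
      ((2 ^ |β| * (D * (1/2) ^ γ)) ^ 2)) * t ^ (-(-1 - 2*γ))) atTop (nhds 0) := by
    simpa using (tendsto_rpow_neg_atTop (y := -1 - 2*γ) (by linarith)).const_mul _
  refine squeeze_zero_norm' ?_ hlim
  filter_upwards [eventually_ge_atTop 1] with t ht
  have ht0 : 0 < t := by linarith
  have key := intervalIntegral.norm_integral_le_of_norm_le (μ := volume) (a := -t) (b := -t/2)
    (f := fun x => (1 + x / t) ^ (2*α) *
      (∫ y in (max x 0)..1, (1 + y / t) ^ β * (y - x) ^ γ) ^ 2)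
    (g := fun x => (1 + x / t) ^ (2*α) * (2 ^ |β| * (D * (t * (1/2)) ^ γ)) ^ 2) (by linarith)
    (ae_of_all _ fun x hx => ?_)
    ((intervalIntegrable_one_add_div_rpow (by linarith) ht0 _ _).mul_const _)
  · refine key.trans_eq ?_
    rw [intervalIntegral.integral_mul_const,
      intervalIntegral.integral_comp_add_div (fun w => w ^ (2*α)) ht0.ne' 1]
    have h1 : 1 + -t / t = 0 := by field_simp; ring
    have h2 : 1 + -t / 2 / t = 1 / 2 := by field_simp; ring
    have h3 : -(-1 - 2*γ) = 1 + (γ + γ) := by ring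
    rw [h1, h2, h3, Real.rpow_add ht0, Real.rpow_one, Real.rpow_add ht0,
      Real.mul_rpow ht0.le (by norm_num), smul_eq_mul]
    ring
  · have hx1 : x ≤ 1 := by linarith [hx.2]
    have h3 : 0 ≤ 1 + x / t := by
      have : -1 ≤ x / t := by rw [le_div_iff₀ ht0]; linarith [hx.1]
      linarith
    have hP := integral_max_kernel_nonneg β γ ht hx1
    rw [Real.norm_of_nonneg (mul_nonneg (Real.rpow_nonneg h3 _) (sq_nonneg _))]
    gcongr
    refine (integral_max_kernel_le hγ ht hx1).trans ?_
    gcongr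
    refine (hle x hx1).trans ?_
    exact mul_le_mul_of_nonneg_left
      (Real.rpow_le_rpow_of_nonpos (by positivity) (by linarith [hx.2]) (by linarith)) hD.le

lemma integral_max_sub_rpow_pos {γ : ℝ} (hγ : -1 < γ) {x : ℝ} (hx : x < 1) :
    0 < ∫ y in (max x 0)..1, (y - x) ^ γ := by
  refine intervalIntegral_pos_of_pos_on (intervalIntegrable_sub_rpow hγ x _ _) (fun y hy => ?_)
    (max_lt hx zero_lt_one)
  exact Real.rpow_pos_of_pos (sub_pos.2 ((le_max_left x 0).trans_lt hy.1)) _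

lemma integrableOn_sq_integral_max_sub_rpow {γ : ℝ} (hγ : -1 < γ) (hγ' : γ < -(1/2 : ℝ)) :
    IntegrableOn (fun x : ℝ => (∫ y in (max x 0)..1, (y - x) ^ γ) ^ 2) (Set.Iic 1) := by
  obtain ⟨D, hD, hle⟩ := exists_integral_max_sub_rpow_le hγ (by linarith)
  have hm := measurable_integral_max_kernel 0 γ 1
  simp only [Real.rpow_zero, one_mul] at hm
  refine ((integrableOn_two_sub_rpow (p := γ + γ) (by linarith)).const_mul (D ^ 2)).mono'
    (hm.pow_const 2).aestronglyMeasurable ?_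
  refine (ae_restrict_iff' measurableSet_Iic).2 (ae_of_all _ fun x hx => ?_)
  have h2 : 0 < 2 - x := by linarith [Set.mem_Iic.1 hx]
  have h0 := integral_max_sub_rpow_nonneg γ hx
  rw [Real.norm_of_nonneg (sq_nonneg _), Real.rpow_add h2]
  calc _ ≤ (D * (2 - x) ^ γ) ^ 2 := by gcongr; exact hle x hx
    _ = _ := by ring

lemma setIntegral_sq_integral_max_sub_rpow_pos {γ : ℝ} (hγ : -1 < γ) (hγ' : γ < -(1/2 : ℝ)) :
    0 < ∫ x in Set.Iic (1:ℝ), (∫ y in (max x 0)..1, (y - x) ^ γ) ^ 2 := by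
  rw [setIntegral_pos_iff_support_of_nonneg_ae (ae_of_all _ fun x => sq_nonneg _)
    (integrableOn_sq_integral_max_sub_rpow hγ hγ')]
  have hsub : Set.Ioo (0:ℝ) 1 ⊆
      (Function.support fun x : ℝ => (∫ y in (max x 0)..1, (y - x) ^ γ) ^ 2) ∩ Set.Iic 1 :=
    fun x hx => ⟨(pow_pos (integral_max_sub_rpow_pos hγ hx.2) 2).ne', hx.2.le⟩
  exact lt_of_lt_of_le (by simp) (measure_mono hsub)

/-- The part of the rescaled variance near the origin converges to the stationary limit. -/
lemma tendsto_variance_near {α β γ : ℝ} (hγ : -1 < γ) (hγ' : γ < -(1/2 : ℝ)) :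
    Tendsto (fun t : ℝ => ∫ x in (-t/2)..1, (1 + x / t) ^ (2*α) *
      (∫ y in (max x 0)..1, (1 + y / t) ^ β * (y - x) ^ γ) ^ 2) atTop
      (nhds (∫ x in Set.Iic (1:ℝ), (∫ y in (max x 0)..1, (y - x) ^ γ) ^ 2)) := by
  have hconv : Tendsto (fun t : ℝ => ∫ x in Set.Iic (1:ℝ), (Set.Ioi (-t/2)).indicator
      (fun x => (1 + x / t) ^ (2*α) *
        (∫ y in (max x 0)..1, (1 + y / t) ^ β * (y - x) ^ γ) ^ 2) x) atTop
      (nhds (∫ x in Set.Iic (1:ℝ), (∫ y in (max x 0)..1, (y - x) ^ γ) ^ 2)) := by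
    refine tendsto_integral_filter_of_dominated_convergence
      (fun x => 2 ^ |2*α| * ((2 ^ |β|) ^ 2 * (∫ y in (max x 0)..1, (y - x) ^ γ) ^ 2))
      (Eventually.of_forall fun t => ?_) ?_
      (((integrableOn_sq_integral_max_sub_rpow hγ hγ').const_mul _).const_mul _) ?_
    · have hm := measurable_integral_max_kernel β γ t
      refine (Measurable.indicator ?_ measurableSet_Ioi).aestronglyMeasurable
      fun_prop
    · filter_upwards [eventually_ge_atTop 1] with t ht
      have ht0 : 0 < t := by linarith
      refine (ae_restrict_iff' measurableSet_Iic).2 (ae_of_all _ fun x hx => ?_)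
      by_cases hxt : x ∈ Set.Ioi (-t/2)
      · rw [Set.indicator_of_mem hxt]
        have hxt' : -t/2 < x := hxt
        have hx1 : x ≤ 1 := hx
        have h3 : -(1/2) ≤ x / t := by rw [le_div_iff₀ ht0]; linarith
        have h4 : x / t ≤ 1 := by rw [div_le_iff₀ ht0]; linarith
        have h5 : 0 ≤ 1 + x / t := by linarith
        have hP := integral_max_kernel_nonneg β γ ht hx1
        rw [Real.norm_of_nonneg (mul_nonneg (Real.rpow_nonneg h5 _) (sq_nonneg _)), ← mul_pow]
        gcongr
        · exact rpow_le_two_rpow_abs (by linarith) (by linarith) _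
        · exact integral_max_kernel_le hγ ht hx1
      · rw [Set.indicator_of_notMem hxt, norm_zero]
        positivity
    · refine (ae_restrict_iff' measurableSet_Iic).2 (ae_of_all _ fun x hx => ?_)
      have h := (tendsto_one_add_div_rpow x (2*α)).mul
        ((tendsto_integral_max_kernel β hγ hx).pow 2)
      rw [one_mul] at h
      refine h.congr' ?_
      filter_upwards [eventually_gt_atTop (-2 * x)] with t ht
      rw [Set.indicator_of_mem (by simp only [Set.mem_Ioi]; linarith)]
  refine hconv.congr' ?_
  filter_upwards [eventually_ge_atTop 1] with t ht
  rw [setIntegral_indicator measurableSet_Ioi, intervalIntegral.integral_of_le (by linarith),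
    Set.inter_comm, Set.Ioi_inter_Iic]

lemma intervalIntegrable_variance {α β γ : ℝ} (hα : -(1/2 : ℝ) < α) (hγ : -1 < γ)
    (hγ0 : γ < 0) {t : ℝ} (ht : 1 ≤ t) :
    IntervalIntegrable (fun x : ℝ => (1 + x / t) ^ (2*α) *
      (∫ y in (max x 0)..1, (1 + y / t) ^ β * (y - x) ^ γ) ^ 2) volume (-t) 1 := by
  have ht0 : 0 < t := by linarith
  obtain ⟨D, hD, hle⟩ := exists_integral_max_sub_rpow_le hγ hγ0
  have hm := measurable_integral_max_kernel β γ t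
  refine ((intervalIntegrable_one_add_div_rpow (by linarith : -1 < 2*α) ht0 _ _).mul_const
    ((2 ^ |β| * (D * 1)) ^ 2)).mono_fun (by fun_prop) ?_
  rw [Set.uIoc_of_le (by linarith)]
  refine (ae_restrict_iff' measurableSet_Ioc).2 (ae_of_all _ fun x hx => ?_)
  beta_reduce
  have hP := integral_max_kernel_nonneg β γ ht hx.2
  rw [norm_mul, norm_mul, Real.norm_of_nonneg (sq_nonneg _), Real.norm_of_nonneg (sq_nonneg _)]
  gcongr
  refine (integral_max_kernel_le hγ ht hx.2).trans ?_
  gcongr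
  refine (hle x hx.2).trans ?_
  gcongr
  exact Real.rpow_le_one_of_one_le_of_nonpos (by linarith [hx.2]) hγ0.le

/-- Asymptotics of the increment variance: `V t ~ K * t ^ (2 * (α + β))` with `K > 0`. -/
lemma exists_variance_asymptotics {α β γ : ℝ} (hα : -(1/2 : ℝ) < α) (hγ : -1 < γ)
    (hγ' : γ < -(1/2 : ℝ)) :
    ∃ (K : ℝ) (Ψ : ℝ → ℝ), 0 < K ∧ Tendsto Ψ atTop (nhds K) ∧ ∀ t : ℝ, 1 ≤ t →
      (∫ s in (0:ℝ)..(t+1), s ^ (2*α) *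
        (∫ u in (max s t)..(t+1), u ^ β * (u - s) ^ γ) ^ 2) = (t ^ (α + β)) ^ 2 * Ψ t := by
  refine ⟨_, fun t => ∫ x in (-t)..1, (1 + x / t) ^ (2*α) *
      (∫ y in (max x 0)..1, (1 + y / t) ^ β * (y - x) ^ γ) ^ 2,
    setIntegral_sq_integral_max_sub_rpow_pos hγ hγ', ?_, fun t ht => increment_variance_eq_mul ht⟩
  have h := (tendsto_variance_far (β := β) hα hγ hγ').add
    (tendsto_variance_near (α := α) (β := β) hγ hγ')
  rw [zero_add] at h
  refine h.congr' ?_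
  filter_upwards [eventually_ge_atTop 1] with t ht
  have hintegrable := intervalIntegrable_variance (β := β) hα hγ (by linarith) ht
  refine integral_add_adjacent_intervals (hintegrable.mono_set ?_) (hintegrable.mono_set ?_)
  all_goals
    rw [Set.uIcc_of_le (by linarith), Set.uIcc_of_le (by linarith)]
    exact Set.Icc_subset_Icc (by linarith) (by linarith)

/-- Theorem 3.5, case `γ < -1/2`: asymptotics of the correlation
`corr(X₁, X_{t+1} - X_t)` of the Gaussian Volterra process. -/
theorem stmt_7 (α β γ : ℝ) (hα : -(1/2 : ℝ) < α) (hγ : -1 < γ)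
    (hαβγ : -(3/2 : ℝ) < α + β + γ) (hγ' : γ < -(1/2 : ℝ))
    (F V r : ℝ → ℝ) (C : ℝ)
    (hF : ∀ t : ℝ, F t = ∫ s in (0:ℝ)..1, s ^ (2*α) *
      (∫ u in s..1, u ^ β * (u - s) ^ γ) *
      (∫ v in t..(t+1), v ^ β * (v - s) ^ γ))
    (hV : ∀ t : ℝ, V t = ∫ s in (0:ℝ)..(t+1), s ^ (2*α) *
      (∫ u in (max s t)..(t+1), u ^ β * (u - s) ^ γ) ^ 2)
    (hC : C = ∫ s in (0:ℝ)..1, s ^ (2*α) *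
      (∫ u in s..1, u ^ β * (u - s) ^ γ) ^ 2)
    (hr : ∀ t : ℝ, r t = F t / (Real.sqrt C * Real.sqrt (V t))) :
    ∃ c : ℝ, 0 < c ∧
      Tendsto (fun t : ℝ => t ^ (α - γ) * r t) atTop (nhds c) := by
  obtain ⟨A, Φ, hA, hΦ, hFΦ⟩ := exists_covariance_asymptotics hα hγ hαβγ
  obtain ⟨K, Ψ, hK, hΨ, hVΨ⟩ := exists_variance_asymptotics (β := β) hα hγ hγ'
  have hCpos : 0 < C := by
    rw [hC]
    refine intervalIntegral_pos_of_pos_on (intervalIntegrable_weight_mul_kernel hα hγ hαβγ).2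
      (fun s hs => ?_) zero_lt_one
    exact mul_pos (Real.rpow_pos_of_pos hs.1 _)
      (pow_pos (integral_rpow_mul_sub_rpow_pos β hγ hs.1 hs.2) 2)
  have hCK : 0 < √C * √K := mul_pos (Real.sqrt_pos.2 hCpos) (Real.sqrt_pos.2 hK)
  refine ⟨A / (√C * √K), div_pos hA hCK, ?_⟩
  refine (hΦ.div (hΨ.sqrt.const_mul (√C)) hCK.ne').congr' ?_
  filter_upwards [eventually_ge_atTop 2] with t ht
  have ht0 : 0 < t := by linarith
  have hp : 0 < t ^ (α + β) := Real.rpow_pos_of_pos ht0 _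
  have hexp : t ^ (α - γ) * t ^ (β + γ) = t ^ (α + β) := by
    rw [← Real.rpow_add ht0]; ring_nf
  rw [hr, hF, hV, hFΦ t ht, hVΨ t (by linarith), Real.sqrt_mul (sq_nonneg _),
    Real.sqrt_sq hp.le, ← mul_div_assoc, ← mul_assoc, hexp, mul_left_comm,
    mul_div_mul_left _ _ hp.ne', Pi.div_apply]
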